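/- arXiv:1911.01494 — 2 statements merged into one kernel-verified Lean document; each statement's English description precedes it below -/
import Mathlib

section
/- Let μ ∈ (0, π/2), c = cos(μ), s = sin(μ), α = c/s. Let H_A, H_B be finite-dimensional complex Hilbert spaces, M₁, M₂ self-adjoint operators on H_A with M₁² = M₂² = 1, and N₁, N₂ self-adjoint operators on H_B with N₁² = N₂² = 1. On H_A ⊗ H_B define Ī = (2/s)·1 − (c/s)(M₁⊗N₁ + M₁⊗N₂) − M₂⊗N₁ + M₂⊗N₂, Z_A = M₁⊗1, X_A = M₂⊗1, Z_B = (1⊗(N₁+N₂))/(2c), X_B = (1⊗(N₁−N₂))/(2s). Then the two sum-of-squares identities hold: Ī = (s·Ī² + 4sc²·(Z_A X_B + X_A Z_B)²)/4 and Ī = (c²/s)·(Z_A − Z_B)² + s·(X_A − X_B)². -/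
open Matrix Kronecker

/-!
After multiplication by `s`, the shifted Bell operator is `2 - C`, where
`C = c m₁ (n₁ + n₂) + s m₂ (n₁ - n₂)`, and `2cs (Z_A X_B + X_A Z_B)` is the operator `D` that `C`
becomes when `n₂` changes sign. As `n₁` and `n₂` are involutions, `n₁ + n₂` and `n₁ - n₂`
anticommute and their squares sum to `4`; hence the cross terms of `C²` and `D²` cancel and
`C² + D² = 4 (c² + s²) = 4`. The first decomposition is then `4 (2 - C) = (2 - C)² + D²`, and the
second is `4 (2 - C) = (2c m₁ - (n₁ + n₂))² + (2s m₂ - (n₁ - n₂))²`, both divided by `4s`.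
-/

section Ring

variable {R : Type*} [Ring R] {a b : R}

theorem add_mul_self_add_sub_mul_self_of_involutions (ha : a * a = 1) (hb : b * b = 1) :
    (a + b) * (a + b) + (a - b) * (a - b) = 4 • (1 : R) := by
  calc (a + b) * (a + b) + (a - b) * (a - b) = 2 • (a * a) + 2 • (b * b) := by noncomm_ring
    _ = 4 • (1 : R) := by rw [ha, hb]; module

theorem add_mul_sub_add_sub_mul_add_of_mul_self_eq (h : a * a = b * b) :
    (a + b) * (a - b) + (a - b) * (a + b) = 0 := by
  calc (a + b) * (a - b) + (a - b) * (a + b) = 2 * (a * a - b * b) := by noncomm_ring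
    _ = 0 := by rw [h, sub_self, mul_zero]

end Ring

/-- `m₁`, `m₂`, `n₁`, `n₂` are involutions and each `mᵢ` commutes with each `nⱼ`: the algebraic
part of Mathlib's `IsCHSHTuple`, in which the observables are also self-adjoint. -/
structure IsCommutingInvolutionTuple {R : Type*} [Monoid R] (m₁ m₂ n₁ n₂ : R) : Prop where
  m₁_mul_self : m₁ * m₁ = 1
  m₂_mul_self : m₂ * m₂ = 1
  n₁_mul_self : n₁ * n₁ = 1
  n₂_mul_self : n₂ * n₂ = 1
  commute_m₁_n₁ : Commute m₁ n₁
  commute_m₁_n₂ : Commute m₁ n₂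
  commute_m₂_n₁ : Commute m₂ n₁
  commute_m₂_n₂ : Commute m₂ n₂

section Algebra

variable {K R : Type*} [CommRing K] [Ring R] [Algebra K R] {m₁ m₂ p q n₁ n₂ : R}

theorem smul_mul_add_smul_mul_mul_self (c s : K) (hm₁ : m₁ * m₁ = 1) (hm₂ : m₂ * m₂ = 1)
    (h₁p : Commute m₁ p) (h₁q : Commute m₁ q) (h₂p : Commute m₂ p) (h₂q : Commute m₂ q) :
    (c • (m₁ * p) + s • (m₂ * q)) * (c • (m₁ * p) + s • (m₂ * q)) =
      c ^ 2 • (p * p) + s ^ 2 • (q * q) +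
        (c * s) • (m₁ * m₂ * (p * q) + m₂ * m₁ * (q * p)) := by
  simp only [add_mul, mul_add, smul_mul_smul_comm, h₁p.symm.mul_mul_mul_comm,
    h₁q.symm.mul_mul_mul_comm, h₂p.symm.mul_mul_mul_comm, h₂q.symm.mul_mul_mul_comm,
    hm₁, hm₂, one_mul]
  module

theorem smul_mul_add_smul_mul_mul_self_add_swap (c s : K)
    (hm₁ : m₁ * m₁ = 1) (hm₂ : m₂ * m₂ = 1)
    (h₁p : Commute m₁ p) (h₁q : Commute m₁ q) (h₂p : Commute m₂ p) (h₂q : Commute m₂ q)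
    (hpq : p * q + q * p = 0) :
    (c • (m₁ * p) + s • (m₂ * q)) * (c • (m₁ * p) + s • (m₂ * q)) +
        (c • (m₁ * q) + s • (m₂ * p)) * (c • (m₁ * q) + s • (m₂ * p)) =
      (c ^ 2 + s ^ 2) • (p * p + q * q) := by
  have hqp : q * p = -(p * q) := eq_neg_of_add_eq_zero_right hpq
  rw [smul_mul_add_smul_mul_mul_self c s hm₁ hm₂ h₁p h₁q h₂p h₂q,
    smul_mul_add_smul_mul_mul_self c s hm₁ hm₂ h₁q h₁p h₂q h₂p, hqp, mul_neg, mul_neg]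
  module

theorem two_mul_smul_sub_mul_self_of_involution (c : K) {m : R} (hm : m * m = 1)
    (hmp : Commute m p) :
    ((2 * c) • m - p) * ((2 * c) • m - p) =
      (4 * c ^ 2) • (1 : R) - (4 * c) • (m * p) + p * p := by
  simp only [sub_mul, mul_sub, smul_mul_assoc, mul_smul_comm, hm, ← hmp.eq]
  module

/-- The weighted CHSH operator `c m₁ (n₁ + n₂) + s m₂ (n₁ - n₂)` of the observables `m₁`, `m₂` of
one party and `n₁`, `n₂` of the other, all acting on the joint system. It is `s` times the Bell
operator of weight `α = c / s`, in a form free of division. -/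
def weightedCHSH (c s : K) (m₁ m₂ n₁ n₂ : R) : R :=
  c • (m₁ * (n₁ + n₂)) + s • (m₂ * (n₁ - n₂))

theorem weightedCHSH_neg_right (c s : K) (m₁ m₂ n₁ n₂ : R) :
    weightedCHSH c s m₁ m₂ n₁ (-n₂) = c • (m₁ * (n₁ - n₂)) + s • (m₂ * (n₁ + n₂)) := by
  rw [weightedCHSH, ← sub_eq_add_neg, sub_neg_eq_add]

namespace IsCommutingInvolutionTuple

variable {c s : K}

theorem weightedCHSH_mul_self_add_neg_right_mul_self
    (h : IsCommutingInvolutionTuple m₁ m₂ n₁ n₂) (hcs : c ^ 2 + s ^ 2 = 1) :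
    weightedCHSH c s m₁ m₂ n₁ n₂ * weightedCHSH c s m₁ m₂ n₁ n₂ +
      weightedCHSH c s m₁ m₂ n₁ (-n₂) * weightedCHSH c s m₁ m₂ n₁ (-n₂) = 4 • (1 : R) := by
  have hanticomm : (n₁ + n₂) * (n₁ - n₂) + (n₁ - n₂) * (n₁ + n₂) = 0 :=
    add_mul_sub_add_sub_mul_add_of_mul_self_eq (h.n₁_mul_self.trans h.n₂_mul_self.symm)
  rw [weightedCHSH_neg_right, weightedCHSH,
    smul_mul_add_smul_mul_mul_self_add_swap c s h.m₁_mul_self h.m₂_mul_self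
      (h.commute_m₁_n₁.add_right h.commute_m₁_n₂) (h.commute_m₁_n₁.sub_right h.commute_m₁_n₂)
      (h.commute_m₂_n₁.add_right h.commute_m₂_n₂) (h.commute_m₂_n₁.sub_right h.commute_m₂_n₂)
      hanticomm,
    hcs, one_smul, add_mul_self_add_sub_mul_self_of_involutions h.n₁_mul_self h.n₂_mul_self]

theorem four_smul_two_sub_weightedCHSH_eq_mul_self_add_neg_right_mul_self
    (h : IsCommutingInvolutionTuple m₁ m₂ n₁ n₂) (hcs : c ^ 2 + s ^ 2 = 1) :
    4 • (2 • 1 - weightedCHSH c s m₁ m₂ n₁ n₂) =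
      (2 • 1 - weightedCHSH c s m₁ m₂ n₁ n₂) * (2 • 1 - weightedCHSH c s m₁ m₂ n₁ n₂) +
        weightedCHSH c s m₁ m₂ n₁ (-n₂) * weightedCHSH c s m₁ m₂ n₁ (-n₂) := by
  have hsum := h.weightedCHSH_mul_self_add_neg_right_mul_self hcs
  set C := weightedCHSH c s m₁ m₂ n₁ n₂
  set D := weightedCHSH c s m₁ m₂ n₁ (-n₂)
  calc 4 • (2 • 1 - C) = 4 • (1 : R) - 4 • C + (C * C + D * D) := by rw [hsum]; module
    _ = (2 • 1 - C) * (2 • 1 - C) + D * D := by noncomm_ring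

theorem four_smul_two_sub_weightedCHSH_eq_two_mul_smul_sub_mul_self_add
    (h : IsCommutingInvolutionTuple m₁ m₂ n₁ n₂) (hcs : c ^ 2 + s ^ 2 = 1) :
    4 • (2 • 1 - weightedCHSH c s m₁ m₂ n₁ n₂) =
      ((2 * c) • m₁ - (n₁ + n₂)) * ((2 * c) • m₁ - (n₁ + n₂)) +
        ((2 * s) • m₂ - (n₁ - n₂)) * ((2 * s) • m₂ - (n₁ - n₂)) := by
  calc 4 • (2 • 1 - weightedCHSH c s m₁ m₂ n₁ n₂)
      = (4 * (c ^ 2 + s ^ 2)) • (1 : R) - 4 • weightedCHSH c s m₁ m₂ n₁ n₂ +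
          ((n₁ + n₂) * (n₁ + n₂) + (n₁ - n₂) * (n₁ - n₂)) := by
        rw [hcs, add_mul_self_add_sub_mul_self_of_involutions h.n₁_mul_self h.n₂_mul_self]
        module
    _ = _ := by
        rw [two_mul_smul_sub_mul_self_of_involution c h.m₁_mul_self
            (h.commute_m₁_n₁.add_right h.commute_m₁_n₂),
          two_mul_smul_sub_mul_self_of_involution s h.m₂_mul_self
            (h.commute_m₂_n₁.sub_right h.commute_m₂_n₂), weightedCHSH]
        module

end IsCommutingInvolutionTuple

end Algebra

theorem sub_inv_smul_eq_inv_smul_sub {K V : Type*} [GroupWithZero K] [AddGroup V]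
    [DistribMulAction K V] {a : K} (ha : a ≠ 0) (x y : V) :
    x - a⁻¹ • y = a⁻¹ • (a • x - y) := by
  rw [smul_sub, inv_smul_smul₀ ha]

section Field

variable {K R : Type*} [Field K] [Ring R] [Algebra K R] {c s : K}

theorem shifted_bell_eq_inv_smul_two_sub_weightedCHSH (hs : s ≠ 0) (m₁ m₂ n₁ n₂ : R) :
    (2 / s) • (1 : R) - (c / s) • (m₁ * n₁ + m₁ * n₂) - m₂ * n₁ + m₂ * n₂ =
      s⁻¹ • (2 • 1 - weightedCHSH c s m₁ m₂ n₁ n₂) := by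
  simp only [weightedCHSH, mul_add, mul_sub]
  match_scalars <;> field_simp

variable [NeZero (2 : K)]

theorem mul_smul_sub_add_mul_smul_add_eq_weightedCHSH_neg_right (hc : c ≠ 0) (hs : s ≠ 0)
    (m₁ m₂ n₁ n₂ : R) :
    m₁ * ((2 * s)⁻¹ • (n₁ - n₂)) + m₂ * ((2 * c)⁻¹ • (n₁ + n₂)) =
      (2 * c * s)⁻¹ • weightedCHSH c s m₁ m₂ n₁ (-n₂) := by
  have h2 : (2 : K) ≠ 0 := two_ne_zero
  simp only [weightedCHSH_neg_right, mul_smul_comm]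
  match_scalars <;> field_simp

theorem stmt_14_general {m₁ m₂ n₁ n₂ I zB xB : R} (h : IsCommutingInvolutionTuple m₁ m₂ n₁ n₂)
    (hc : c ≠ 0) (hs : s ≠ 0) (hcs : c ^ 2 + s ^ 2 = 1)
    (hI : I = (2 / s) • (1 : R) - (c / s) • (m₁ * n₁ + m₁ * n₂) - m₂ * n₁ + m₂ * n₂)
    (hzB : zB = (2 * c)⁻¹ • (n₁ + n₂)) (hxB : xB = (2 * s)⁻¹ • (n₁ - n₂)) :
    I = (4 : K)⁻¹ • (s • (I * I) +
        (4 * s * c ^ 2) • ((m₁ * xB + m₂ * zB) * (m₁ * xB + m₂ * zB))) ∧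
    I = (c ^ 2 / s) • ((m₁ - zB) * (m₁ - zB)) + s • ((m₂ - xB) * (m₂ - xB)) := by
  have h2 : (2 : K) ≠ 0 := two_ne_zero
  have h4 : (4 : K) = 2 ^ 2 := by norm_num
  rw [shifted_bell_eq_inv_smul_two_sub_weightedCHSH hs] at hI
  have hI4 : I = (2 ^ 2 * s)⁻¹ • (4 • (2 • 1 - weightedCHSH c s m₁ m₂ n₁ n₂)) := by
    rw [hI]
    match_scalars <;> field_simp <;> norm_num
  constructor
  · refine hI4.trans ?_
    rw [h.four_smul_two_sub_weightedCHSH_eq_mul_self_add_neg_right_mul_self hcs, hI, hzB, hxB,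
      mul_smul_sub_add_mul_smul_add_eq_weightedCHSH_neg_right hc hs, h4]
    simp only [smul_mul_smul_comm]
    match_scalars <;> field_simp
  · rw [hI4, h.four_smul_two_sub_weightedCHSH_eq_two_mul_smul_sub_mul_self_add hcs, hzB, hxB,
      sub_inv_smul_eq_inv_smul_sub (mul_ne_zero h2 hc),
      sub_inv_smul_eq_inv_smul_sub (mul_ne_zero h2 hs)]
    simp only [smul_mul_smul_comm]
    match_scalars <;> field_simp

end Field

section Kronecker

variable {K l m : Type*} [CommSemiring K] [Fintype l] [Fintype m] [DecidableEq l] [DecidableEq m]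

theorem kronecker_one_mul_one_kronecker (A : Matrix l l K) (B : Matrix m m K) :
    (A ⊗ₖ (1 : Matrix m m K)) * ((1 : Matrix l l K) ⊗ₖ B) = A ⊗ₖ B := by
  rw [← mul_kronecker_mul, mul_one, one_mul]

theorem commute_kronecker_one_one_kronecker
    (A : Matrix l l K) (B : Matrix m m K) :
    Commute (A ⊗ₖ (1 : Matrix m m K)) ((1 : Matrix l l K) ⊗ₖ B) := by
  rw [commute_iff_eq, kronecker_one_mul_one_kronecker, ← mul_kronecker_mul, one_mul, mul_one]

theorem kronecker_mul_self_of_involutions {A : Matrix l l K} {B : Matrix m m K}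
    (hA : A * A = 1) (hB : B * B = 1) : (A ⊗ₖ B) * (A ⊗ₖ B) = 1 := by
  rw [← mul_kronecker_mul, hA, hB, one_kronecker_one]

theorem IsCommutingInvolutionTuple.kronecker
    {M₁ M₂ : Matrix l l K} {N₁ N₂ : Matrix m m K}
    (hM₁ : M₁ * M₁ = 1) (hM₂ : M₂ * M₂ = 1) (hN₁ : N₁ * N₁ = 1) (hN₂ : N₂ * N₂ = 1) :
    IsCommutingInvolutionTuple (M₁ ⊗ₖ (1 : Matrix m m K)) (M₂ ⊗ₖ (1 : Matrix m m K))
      ((1 : Matrix l l K) ⊗ₖ N₁) ((1 : Matrix l l K) ⊗ₖ N₂) where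
  m₁_mul_self := kronecker_mul_self_of_involutions hM₁ (one_mul 1)
  m₂_mul_self := kronecker_mul_self_of_involutions hM₂ (one_mul 1)
  n₁_mul_self := kronecker_mul_self_of_involutions (one_mul 1) hN₁
  n₂_mul_self := kronecker_mul_self_of_involutions (one_mul 1) hN₂
  commute_m₁_n₁ := commute_kronecker_one_one_kronecker M₁ N₁
  commute_m₁_n₂ := commute_kronecker_one_one_kronecker M₁ N₂
  commute_m₂_n₁ := commute_kronecker_one_one_kronecker M₂ N₁
  commute_m₂_n₂ := commute_kronecker_one_one_kronecker M₂ N₂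

end Kronecker

theorem kronecker_sub {K l m n p : Type*} [NonUnitalNonAssocRing K] (A : Matrix l m K)
    (B C : Matrix n p K) : A ⊗ₖ (B - C) = A ⊗ₖ B - A ⊗ₖ C :=
  Matrix.ext fun _ _ => mul_sub _ _ _

theorem complex_cos_ofReal_ne_zero {μ : ℝ} (hμ : μ ∈ Set.Ioo (-(Real.pi / 2)) (Real.pi / 2)) :
    Complex.cos μ ≠ 0 :=
  mod_cast (Real.cos_pos_of_mem_Ioo hμ).ne'

theorem complex_sin_ofReal_ne_zero {μ : ℝ} (hμ : μ ∈ Set.Ioo 0 Real.pi) : Complex.sin μ ≠ 0 :=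
  mod_cast (Real.sin_pos_of_mem_Ioo hμ).ne'

/-- Two sum-of-squares decompositions of the shifted weighted-CHSH Bell
operator.  `H_A = ℂ^{nA}`, `H_B = ℂ^{nB}`, `H_A ⊗ H_B ≅ ℂ^{nA·nB}`, operator tensor
products are Kronecker products. -/
theorem stmt_14 (μ : ℝ) (hμ : μ ∈ Set.Ioo 0 (Real.pi / 2))
    (c s α : ℝ) (hc : c = Real.cos μ) (hs : s = Real.sin μ) (hα : α = c / s)
    (nA nB : ℕ)
    (M₁ M₂ : Matrix (Fin nA) (Fin nA) ℂ)
    (hM₁ : M₁.IsHermitian) (hM₁sq : M₁ * M₁ = 1)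
    (hM₂ : M₂.IsHermitian) (hM₂sq : M₂ * M₂ = 1)
    (N₁ N₂ : Matrix (Fin nB) (Fin nB) ℂ)
    (hN₁ : N₁.IsHermitian) (hN₁sq : N₁ * N₁ = 1)
    (hN₂ : N₂.IsHermitian) (hN₂sq : N₂ * N₂ = 1)
    (Ibar ZA XA ZB XB : Matrix (Fin nA × Fin nB) (Fin nA × Fin nB) ℂ)
    (hIbar : Ibar = ((2 / s : ℝ) : ℂ) • (1 : Matrix (Fin nA × Fin nB) (Fin nA × Fin nB) ℂ) -
        ((c / s : ℝ) : ℂ) • (M₁ ⊗ₖ N₁ + M₁ ⊗ₖ N₂) - M₂ ⊗ₖ N₁ + M₂ ⊗ₖ N₂)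
    (hZA : ZA = M₁ ⊗ₖ (1 : Matrix (Fin nB) (Fin nB) ℂ))
    (hXA : XA = M₂ ⊗ₖ (1 : Matrix (Fin nB) (Fin nB) ℂ))
    (hZB : ZB = ((2 * c : ℝ) : ℂ)⁻¹ • ((1 : Matrix (Fin nA) (Fin nA) ℂ) ⊗ₖ (N₁ + N₂)))
    (hXB : XB = ((2 * s : ℝ) : ℂ)⁻¹ • ((1 : Matrix (Fin nA) (Fin nA) ℂ) ⊗ₖ (N₁ - N₂))) :
    Ibar = ((4 : ℂ))⁻¹ • ((s : ℂ) • (Ibar * Ibar) +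
        ((4 * s * c ^ 2 : ℝ) : ℂ) • ((ZA * XB + XA * ZB) * (ZA * XB + XA * ZB))) ∧
    Ibar = ((c ^ 2 / s : ℝ) : ℂ) • ((ZA - ZB) * (ZA - ZB)) +
        ((s : ℝ) : ℂ) • ((XA - XB) * (XA - XB)) := by
  subst hc hs hZA hXA
  push_cast at hIbar hZB hXB ⊢
  exact stmt_14_general (.kronecker hM₁sq hM₂sq hN₁sq hN₂sq)
    (complex_cos_ofReal_ne_zero ⟨by linarith [hμ.1, hμ.2], hμ.2⟩)
    (complex_sin_ofReal_ne_zero ⟨hμ.1, by linarith [hμ.1, hμ.2]⟩)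
    (Complex.cos_sq_add_sin_sq μ)
    (by simpa only [kronecker_one_mul_one_kronecker] using hIbar)
    (by rwa [← kronecker_add]) (by rwa [← kronecker_sub])
end

section
/- (Approximate Magic Square anticommutation.) There is a universal constant C > 0 with the following property. Let H_A, H_B be finite-dimensional complex Hilbert spaces and ψ ∈ H_A ⊗ H_B a unit vector. Let F₀, F₁, F₂, G₀, G₁, G₂, H₀, H₁, H₂ be self-adjoint operators on H_A squaring to the identity, and F₀', F₁', F₂', G₀', G₁', G₂', H₀', H₁', H₂' be self-adjoint operators on H_B squaring to the identity. Let δ ≥ 0 and suppose: ‖(X ⊗ 1)ψ − (1 ⊗ X')ψ‖ ≤ δ for each of the nine corresponding pairs (X, X'); ‖(F₀F₁F₂ ⊗ 1)ψ − ψ‖ ≤ δ; ‖(G₀G₁G₂ ⊗ 1)ψ − ψ‖ ≤ δ; ‖(H₀H₁H₂ ⊗ 1)ψ − ψ‖ ≤ δ; ‖(F₀G₂H₀ ⊗ 1)ψ − ψ‖ ≤ δ; ‖(F₂G₀H₁ ⊗ 1)ψ − ψ‖ ≤ δ; and ‖(F₁G₁H₂ ⊗ 1)ψ + ψ‖ ≤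 δ. Then ‖((F₀G₀ + G₀F₀) ⊗ 1)ψ‖ ≤ Cδ and ‖((F₂G₂ + G₂F₂) ⊗ 1)ψ‖ ≤ Cδ. -/
open Matrix Kronecker

/-- The action of a matrix on a vector of the corresponding Euclidean (Hilbert) space. -/
noncomputable def mApply {ι κ : Type*} [Fintype ι] (A : Matrix κ ι ℂ) (v : EuclideanSpace ℂ ι) :
    EuclideanSpace ℂ κ :=
  (WithLp.equiv 2 (κ → ℂ)).symm (A.mulVec (WithLp.equiv 2 (ι → ℂ) v))

/-!
If `X ψ ≈ X' ψ` for an operator `X'` of Bob's, then every operator `T` of Alice's satisfies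
`T X ψ ≈ T X' ψ = X' T ψ`. Hence an approximate relation `T ψ ≈ 0` survives multiplication by `X`
on the right, at the cost of an error `‖T‖ δ`, just as it survives multiplication by a contraction
on the left. The exact derivation of anticommutation from the six constraints of the square
therefore carries over to the state `ψ`: `F₀ (F₂ G₂ + G₂ F₂) G₀` is a sum of six terms, each of
which is a multiple of one of the relations `F₀ F₂ = F₁`, `G₂ G₀ = G₁`, `F₁ G₁ = -H₂`,
`H₀ H₁ = H₂`, `F₂ G₀ = H₁`, `F₀ G₂ = H₀`.
-/

theorem anticommutator_eq_sum_of_relations {R : Type*} [Ring R]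
    (F₀ F₁ F₂ G₀ G₁ G₂ H₀ H₁ H₂ : R) :
    F₀ * ((F₂ * G₂ + G₂ * F₂) * G₀) =
      F₀ * F₂ * (G₂ * G₀ - G₁) + (F₀ * F₂ - F₁) * G₁ + (F₁ * G₁ + H₂) + (H₀ * H₁ - H₂) +
        H₀ * (F₂ * G₀ - H₁) + (F₀ * G₂ - H₀) * F₂ * G₀ := by
  noncomm_ring

theorem norm_mul_le_one {R : Type*} [NonUnitalSeminormedRing R] {a b : R} (ha : ‖a‖ ≤ 1)
    (hb : ‖b‖ ≤ 1) : ‖a * b‖ ≤ 1 :=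
  (norm_mul_le_of_le ha hb).trans_eq (one_mul 1)

theorem norm_sub_le_two {M : Type*} [SeminormedAddGroup M] {a b : M} (ha : ‖a‖ ≤ 1)
    (hb : ‖b‖ ≤ 1) : ‖a - b‖ ≤ 2 :=
  (norm_sub_le_of_le ha hb).trans_eq one_add_one_eq_two

section CommutingOperators

variable {𝕜 E : Type*} [NontriviallyNormedField 𝕜] [SeminormedAddCommGroup E] [NormedSpace 𝕜 E]

theorem norm_mul_apply_le {U : E →L[𝕜] E} (hU : ‖U‖ ≤ 1) (T : E →L[𝕜] E) (v : E) :
    ‖(U * T) v‖ ≤ ‖T v‖ :=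
  (U.le_of_opNorm_le hU (T v)).trans_eq (one_mul _)

/-- `X` is a contractive involution in Alice's algebra `𝒜` whose action on the state `ψ` is
reproduced, up to an error `δ`, by a contraction on Bob's side. Bob's side is modelled by the
commutant of `𝒜`, so that no tensor product decomposition of the space is needed. -/
structure IsMirroredInvolution (𝒜 : Subalgebra 𝕜 (E →L[𝕜] E)) (ψ : E) (δ : ℝ) (X : E →L[𝕜] E) :
    Prop where
  mem : X ∈ 𝒜
  norm_le_one : ‖X‖ ≤ 1
  mul_self : X * X = 1
  exists_mirror : ∃ X' ∈ Subalgebra.centralizer 𝕜 (𝒜 : Set (E →L[𝕜] E)),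
    ‖X'‖ ≤ 1 ∧ ‖X ψ - X' ψ‖ ≤ δ

variable {𝒜 : Subalgebra 𝕜 (E →L[𝕜] E)} {ψ : E} {δ c : ℝ} {T V W X Y Z : E →L[𝕜] E}

namespace IsMirroredInvolution

theorem error_nonneg (hX : IsMirroredInvolution 𝒜 ψ δ X) : 0 ≤ δ :=
  let ⟨_, _, _, hδ⟩ := hX.exists_mirror
  (norm_nonneg _).trans hδ

theorem mul_self_cancel_left (hX : IsMirroredInvolution 𝒜 ψ δ X) (T : E →L[𝕜] E) :
    X * (X * T) = T := by
  rw [← mul_assoc, hX.mul_self, one_mul]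

theorem neg (hX : IsMirroredInvolution 𝒜 ψ δ X) : IsMirroredInvolution 𝒜 ψ δ (-X) where
  mem := neg_mem hX.mem
  norm_le_one := (norm_neg X).trans_le hX.norm_le_one
  mul_self := by rw [neg_mul_neg, hX.mul_self]
  exists_mirror := by
    obtain ⟨X', hmem, hnorm, hδ⟩ := hX.exists_mirror
    refine ⟨-X', neg_mem hmem, (norm_neg X').trans_le hnorm, ?_⟩
    rwa [_root_.neg_apply, _root_.neg_apply, neg_sub_neg, norm_sub_rev]

theorem norm_mul_apply_le_add (hX : IsMirroredInvolution 𝒜 ψ δ X) (hT : T ∈ 𝒜) :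
    ‖(T * X) ψ‖ ≤ ‖T ψ‖ + ‖T‖ * δ := by
  obtain ⟨X', hmem, hnorm, hδ⟩ := hX.exists_mirror
  have hcomm : T * X' = X' * T := Subalgebra.mem_centralizer_iff 𝕜 |>.1 hmem T hT
  have hsplit : (T * X) ψ = (X' * T) ψ + T (X ψ - X' ψ) := by
    rw [← hcomm, map_sub]
    exact (add_sub_cancel _ _).symm
  calc ‖(T * X) ψ‖ ≤ ‖(X' * T) ψ‖ + ‖T (X ψ - X' ψ)‖ := hsplit ▸ norm_add_le _ _
    _ ≤ ‖T ψ‖ + ‖T‖ * δ := add_le_add (norm_mul_apply_le hnorm T ψ) (T.le_opNorm_of_le hδ)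

theorem norm_mul_apply_le_add_two (hX : IsMirroredInvolution 𝒜 ψ δ X) (hT : T ∈ 𝒜)
    (hT2 : ‖T‖ ≤ 2) : ‖(T * X) ψ‖ ≤ ‖T ψ‖ + 2 * δ :=
  (hX.norm_mul_apply_le_add hT).trans <| by gcongr; exact hX.error_nonneg

theorem norm_mul_mul_reverse_sub_one_apply_le (hX : IsMirroredInvolution 𝒜 ψ δ X)
    (hY : IsMirroredInvolution 𝒜 ψ δ Y) (hZ : IsMirroredInvolution 𝒜 ψ δ Z) :
    ‖(Z * Y * X - 1) ψ‖ ≤ ‖(X * Y * Z - 1) ψ‖ := by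
  have hfactor : Z * Y * X - 1 = -(Z * Y * X) * (X * Y * Z - 1) := by
    rw [neg_mul, mul_sub, mul_one, neg_sub]
    simp only [mul_assoc, hX.mul_self_cancel_left, hY.mul_self_cancel_left, hZ.mul_self]
  rw [hfactor]
  refine norm_mul_apply_le ?_ _ ψ
  rw [norm_neg]
  exact norm_mul_le_one (norm_mul_le_one hZ.norm_le_one hY.norm_le_one) hX.norm_le_one

theorem norm_triple_sub_one_mul_apply_le (hX : IsMirroredInvolution 𝒜 ψ δ X)
    (hY : IsMirroredInvolution 𝒜 ψ δ Y) (hZ : IsMirroredInvolution 𝒜 ψ δ Z) :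
    ‖((X * Y * Z - 1) * Z) ψ‖ ≤ ‖(X * Y * Z - 1) ψ‖ + 2 * δ :=
  hZ.norm_mul_apply_le_add_two
    (sub_mem (mul_mem (mul_mem hX.mem hY.mem) hZ.mem) (one_mem 𝒜))
    (norm_sub_le_two
      (norm_mul_le_one (norm_mul_le_one hX.norm_le_one hY.norm_le_one) hZ.norm_le_one)
      ContinuousLinearMap.norm_id_le)

theorem norm_mul_sub_apply_le_of_triple (hX : IsMirroredInvolution 𝒜 ψ δ X)
    (hY : IsMirroredInvolution 𝒜 ψ δ Y) (hZ : IsMirroredInvolution 𝒜 ψ δ Z)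
    (h : ‖(X * Y * Z - 1) ψ‖ ≤ c) : ‖(X * Y - Z) ψ‖ ≤ c + 2 * δ := by
  have hfactor : X * Y - Z = (X * Y * Z - 1) * Z := by
    rw [sub_mul, one_mul, mul_assoc _ Z, hZ.mul_self, mul_one]
  rw [hfactor]
  exact (norm_triple_sub_one_mul_apply_le hX hY hZ).trans (by gcongr)

theorem norm_outer_mul_sub_apply_le_of_triple (hX : IsMirroredInvolution 𝒜 ψ δ X)
    (hY : IsMirroredInvolution 𝒜 ψ δ Y) (hZ : IsMirroredInvolution 𝒜 ψ δ Z)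
    (h : ‖(X * Y * Z - 1) ψ‖ ≤ c) : ‖(X * Z - Y) ψ‖ ≤ c + 2 * δ := by
  have hfactor : X * Z - Y = -X * ((X * Y * Z - 1) * Z) := by
    rw [neg_mul, sub_mul, mul_sub, neg_sub, one_mul]
    simp only [mul_assoc, hX.mul_self_cancel_left, hZ.mul_self, mul_one]
  rw [hfactor]
  calc ‖(-X * ((X * Y * Z - 1) * Z)) ψ‖ ≤ ‖((X * Y * Z - 1) * Z) ψ‖ :=
        norm_mul_apply_le hX.neg.norm_le_one _ ψ
    _ ≤ ‖(X * Y * Z - 1) ψ‖ + 2 * δ := norm_triple_sub_one_mul_apply_le hX hY hZ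
    _ ≤ c + 2 * δ := by gcongr

theorem norm_swap_mul_sub_apply_le_of_triple (hX : IsMirroredInvolution 𝒜 ψ δ X)
    (hY : IsMirroredInvolution 𝒜 ψ δ Y) (hZ : IsMirroredInvolution 𝒜 ψ δ Z)
    (h : ‖(X * Y * Z - 1) ψ‖ ≤ c) : ‖(Y * X - Z) ψ‖ ≤ c := by
  have hfactor : Y * X - Z = Z * (Z * Y * X - 1) := by
    rw [mul_sub, mul_one, mul_assoc Z, hZ.mul_self_cancel_left]
  rw [hfactor]
  exact (norm_mul_apply_le hZ.norm_le_one _ ψ).trans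
    ((norm_mul_mul_reverse_sub_one_apply_le hX hY hZ).trans h)

theorem norm_mul_sub_mul_apply_le (hX : IsMirroredInvolution 𝒜 ψ δ X)
    (hY : IsMirroredInvolution 𝒜 ψ δ Y) (hZ : IsMirroredInvolution 𝒜 ψ δ Z)
    (hW : IsMirroredInvolution 𝒜 ψ δ W) (h : ‖(X * Y - Z) ψ‖ ≤ c) :
    ‖((X * Y - Z) * W) ψ‖ ≤ c + 2 * δ :=
  (hW.norm_mul_apply_le_add_two (sub_mem (mul_mem hX.mem hY.mem) hZ.mem)
    (norm_sub_le_two (norm_mul_le_one hX.norm_le_one hY.norm_le_one) hZ.norm_le_one)).trans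
    (by gcongr)

theorem norm_mul_sub_mul_mul_apply_le (hX : IsMirroredInvolution 𝒜 ψ δ X)
    (hY : IsMirroredInvolution 𝒜 ψ δ Y) (hZ : IsMirroredInvolution 𝒜 ψ δ Z)
    (hV : IsMirroredInvolution 𝒜 ψ δ V) (hW : IsMirroredInvolution 𝒜 ψ δ W)
    (h : ‖(X * Y - Z) ψ‖ ≤ c) : ‖((X * Y - Z) * V * W) ψ‖ ≤ c + 4 * δ := by
  have hmem : (X * Y - Z) * V ∈ 𝒜 := mul_mem (sub_mem (mul_mem hX.mem hY.mem) hZ.mem) hV.mem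
  have hnorm : ‖(X * Y - Z) * V‖ ≤ 2 :=
    (norm_mul_le_of_le
      (norm_sub_le_two (norm_mul_le_one hX.norm_le_one hY.norm_le_one) hZ.norm_le_one)
      hV.norm_le_one).trans_eq (mul_one 2)
  linarith [hW.norm_mul_apply_le_add_two hmem hnorm, norm_mul_sub_mul_apply_le hX hY hZ hV h]

theorem norm_conj_anticommutator_apply_le (hX : IsMirroredInvolution 𝒜 ψ δ X)
    (hY : IsMirroredInvolution 𝒜 ψ δ Y) (hV : IsMirroredInvolution 𝒜 ψ δ V)
    (hW : IsMirroredInvolution 𝒜 ψ δ W) :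
    ‖(X * Y + Y * X) ψ‖ ≤ ‖(V * ((X * Y + Y * X) * W)) ψ‖ + 2 * δ := by
  set S := X * Y + Y * X
  have hfactor : S = V * (V * (S * W) * W) := by
    simp only [mul_assoc, hV.mul_self_cancel_left, hW.mul_self, mul_one]
  have hmem : V * (S * W) ∈ 𝒜 :=
    mul_mem hV.mem (mul_mem
      (add_mem (mul_mem hX.mem hY.mem) (mul_mem hY.mem hX.mem)) hW.mem)
  have hS : ‖S‖ ≤ 2 :=
    (norm_add_le_of_le (norm_mul_le_one hX.norm_le_one hY.norm_le_one)
      (norm_mul_le_one hY.norm_le_one hX.norm_le_one)).trans_eq one_add_one_eq_two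
  have hnorm : ‖V * (S * W)‖ ≤ 2 :=
    (norm_mul_le_of_le hV.norm_le_one (norm_mul_le_of_le hS hW.norm_le_one)).trans_eq
      (by norm_num)
  calc ‖S ψ‖ ≤ ‖(V * (S * W) * W) ψ‖ := by
        conv_lhs => rw [hfactor]
        exact norm_mul_apply_le hV.norm_le_one _ ψ
    _ ≤ ‖(V * (S * W)) ψ‖ + 2 * δ := hW.norm_mul_apply_le_add_two hmem hnorm

theorem norm_anticommutator_apply_le {F₀ F₁ F₂ G₀ G₁ G₂ H₀ H₁ H₂ : E →L[𝕜] E}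
    (hF₀ : IsMirroredInvolution 𝒜 ψ δ F₀) (hF₁ : IsMirroredInvolution 𝒜 ψ δ F₁)
    (hF₂ : IsMirroredInvolution 𝒜 ψ δ F₂) (hG₀ : IsMirroredInvolution 𝒜 ψ δ G₀)
    (hG₁ : IsMirroredInvolution 𝒜 ψ δ G₁) (hG₂ : IsMirroredInvolution 𝒜 ψ δ G₂)
    (hH₀ : IsMirroredInvolution 𝒜 ψ δ H₀)
    (hF : ‖(F₀ * F₂ - F₁) ψ‖ ≤ c) (hG : ‖(G₂ * G₀ - G₁) ψ‖ ≤ c) (hH : ‖(H₀ * H₁ - H₂) ψ‖ ≤ c)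
    (h₀ : ‖(F₀ * G₂ - H₀) ψ‖ ≤ c) (h₁ : ‖(F₂ * G₀ - H₁) ψ‖ ≤ c)
    (h₂ : ‖(F₁ * G₁ + H₂) ψ‖ ≤ c) :
    ‖(F₂ * G₂ + G₂ * F₂) ψ‖ ≤ 6 * c + 8 * δ := by
  have hFG : ‖(F₀ * F₂ * (G₂ * G₀ - G₁)) ψ‖ ≤ c :=
    (norm_mul_apply_le (norm_mul_le_one hF₀.norm_le_one hF₂.norm_le_one) _ ψ).trans hG
  have hFG₁ : ‖((F₀ * F₂ - F₁) * G₁) ψ‖ ≤ c + 2 * δ :=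
    norm_mul_sub_mul_apply_le hF₀ hF₂ hF₁ hG₁ hF
  have hH₀FG : ‖(H₀ * (F₂ * G₀ - H₁)) ψ‖ ≤ c := (norm_mul_apply_le hH₀.norm_le_one _ ψ).trans h₁
  have hFGFG : ‖((F₀ * G₂ - H₀) * F₂ * G₀) ψ‖ ≤ c + 4 * δ :=
    norm_mul_sub_mul_mul_apply_le hF₀ hG₂ hH₀ hF₂ hG₀ h₀
  have hsum : ‖(F₀ * ((F₂ * G₂ + G₂ * F₂) * G₀)) ψ‖ ≤
      c + (c + 2 * δ) + c + c + c + (c + 4 * δ) := by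
    rw [anticommutator_eq_sum_of_relations F₀ F₁ F₂ G₀ G₁ G₂ H₀ H₁ H₂]
    exact norm_add_le_of_le (norm_add_le_of_le (norm_add_le_of_le (norm_add_le_of_le
      (norm_add_le_of_le hFG hFG₁) h₂) hH) hH₀FG) hFGFG
  linarith [norm_conj_anticommutator_apply_le hF₂ hG₂ hF₀ hG₀]

end IsMirroredInvolution

open IsMirroredInvolution in
theorem stmt_18_general {F G H : Fin 3 → E →L[𝕜] E}
    (hF : ∀ i, IsMirroredInvolution 𝒜 ψ δ (F i)) (hG : ∀ i, IsMirroredInvolution 𝒜 ψ δ (G i))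
    (hH : ∀ i, IsMirroredInvolution 𝒜 ψ δ (H i))
    (hFFF : ‖(F 0 * F 1 * F 2) ψ - ψ‖ ≤ δ) (hGGG : ‖(G 0 * G 1 * G 2) ψ - ψ‖ ≤ δ)
    (hHHH : ‖(H 0 * H 1 * H 2) ψ - ψ‖ ≤ δ) (h₀ : ‖(F 0 * G 2 * H 0) ψ - ψ‖ ≤ δ)
    (h₁ : ‖(F 2 * G 0 * H 1) ψ - ψ‖ ≤ δ) (h₂ : ‖(F 1 * G 1 * H 2) ψ + ψ‖ ≤ δ) :
    ‖(F 0 * G 0 + G 0 * F 0) ψ‖ ≤ 26 * δ ∧ ‖(F 2 * G 2 + G 2 * F 2) ψ‖ ≤ 26 * δ := by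
  have hFGH₀ := norm_mul_sub_apply_le_of_triple (hF 0) (hG 2) (hH 0) h₀
  have hFGH₁ := norm_mul_sub_apply_le_of_triple (hF 2) (hG 0) (hH 1) h₁
  have hFGH₂ : ‖(F 1 * G 1 + H 2) ψ‖ ≤ δ + 2 * δ := by
    have hneg : ‖(-F 1 * G 1 * H 2 - 1) ψ‖ ≤ δ := by
      rwa [neg_mul, neg_mul, ← neg_add', _root_.neg_apply, norm_neg]
    have hsub := norm_mul_sub_apply_le_of_triple (hF 1).neg (hG 1) (hH 2) hneg
    rwa [neg_mul, ← neg_add', _root_.neg_apply, norm_neg] at hsub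
  have hHHH' := norm_swap_mul_sub_apply_le_of_triple (hH 0) (hH 1) (hH 2) hHHH
  constructor
  · have hFFF' := (norm_mul_mul_reverse_sub_one_apply_le (hF 0) (hF 1) (hF 2)).trans hFFF
    have := norm_anticommutator_apply_le (hF 2) (hF 1) (hF 0) (hG 2) (hG 1) (hG 0) (hH 1)
      (norm_outer_mul_sub_apply_le_of_triple (hF 2) (hF 1) (hF 0) hFFF')
      (norm_outer_mul_sub_apply_le_of_triple (hG 0) (hG 1) (hG 2) hGGG)
      (hHHH'.trans (by linarith [(hF 0).error_nonneg])) hFGH₁ hFGH₀ hFGH₂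
    linarith
  · have hGGG' := (norm_mul_mul_reverse_sub_one_apply_le (hG 0) (hG 1) (hG 2)).trans hGGG
    have := norm_anticommutator_apply_le (hF 0) (hF 1) (hF 2) (hG 0) (hG 1) (hG 2) (hH 0)
      (norm_outer_mul_sub_apply_le_of_triple (hF 0) (hF 1) (hF 2) hFFF)
      (norm_outer_mul_sub_apply_le_of_triple (hG 2) (hG 1) (hG 0) hGGG')
      (norm_mul_sub_apply_le_of_triple (hH 0) (hH 1) (hH 2) hHHH) hFGH₀ hFGH₁ hFGH₂
    linarith

end CommutingOperators

section TensorProduct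

variable {𝕜 ι κ : Type*} [RCLike 𝕜] [Fintype ι] [DecidableEq ι] [Fintype κ] [DecidableEq κ]

theorem mApply_eq_toEuclideanCLM (A : Matrix ι ι ℂ) (v : EuclideanSpace ℂ ι) :
    mApply A v = toEuclideanCLM (n := ι) (𝕜 := ℂ) A v :=
  rfl

theorem norm_toEuclideanCLM_le_one {U : Matrix ι ι 𝕜} (hU : U ∈ unitaryGroup ι 𝕜) :
    ‖toEuclideanCLM (n := ι) (𝕜 := 𝕜) U‖ ≤ 1 :=
  ContinuousLinearMap.opNorm_le_bound _ zero_le_one fun v ↦ by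
    rw [one_mul, ContinuousLinearMap.norm_map_of_mem_unitary (Unitary.map_mem _ hU)]

theorem mem_unitaryGroup_of_isHermitian_of_mul_self {R : Type*} [CommRing R] [StarRing R]
    {X : Matrix ι ι R} (hX : X.IsHermitian) (hXX : X * X = 1) : X ∈ unitaryGroup ι R :=
  mem_unitaryGroup_iff.2 <| by rw [star_eq_conjTranspose, hX.eq, hXX]

variable (𝕜 ι κ) in
/-- The representation `X ↦ X ⊗ 1` of Alice's matrices on the space `𝕜^ι ⊗ 𝕜^κ`, which is encoded
as `EuclideanSpace 𝕜 (ι × κ)`. Its range serves as Alice's algebra. -/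
noncomputable def leftTensorHom : Matrix ι ι 𝕜 →ₐ[𝕜]
    (EuclideanSpace 𝕜 (ι × κ) →L[𝕜] EuclideanSpace 𝕜 (ι × κ)) :=
  (toEuclideanCLM (n := ι × κ) (𝕜 := 𝕜)).toAlgEquiv.toAlgHom.comp <|
    (kroneckerAlgEquiv ι κ 𝕜).toAlgHom.comp Algebra.TensorProduct.includeLeft

theorem leftTensorHom_apply (X : Matrix ι ι 𝕜) :
    leftTensorHom 𝕜 ι κ X = toEuclideanCLM (n := ι × κ) (𝕜 := 𝕜) (X ⊗ₖ (1 : Matrix κ κ 𝕜)) := by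
  simp [leftTensorHom]

theorem toEuclideanCLM_one_kronecker_mem_centralizer (Y : Matrix κ κ 𝕜) :
    toEuclideanCLM (n := ι × κ) (𝕜 := 𝕜) ((1 : Matrix ι ι 𝕜) ⊗ₖ Y) ∈
      Subalgebra.centralizer 𝕜 ((leftTensorHom 𝕜 ι κ).range : Set _) := by
  rintro _ ⟨X, rfl⟩
  simp only [AlgHom.toRingHom_eq_coe, RingHom.coe_coe, leftTensorHom_apply, ← map_mul,
    ← mul_kronecker_mul, one_mul, mul_one]

theorem isMirroredInvolution_leftTensorHom {X : Matrix ι ι 𝕜} {X' : Matrix κ κ 𝕜}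
    {ψ : EuclideanSpace 𝕜 (ι × κ)} {δ : ℝ} (hX : X.IsHermitian ∧ X * X = 1)
    (hX' : X' ∈ unitaryGroup κ 𝕜)
    (h : ‖leftTensorHom 𝕜 ι κ X ψ -
      toEuclideanCLM (n := ι × κ) (𝕜 := 𝕜) ((1 : Matrix ι ι 𝕜) ⊗ₖ X') ψ‖ ≤ δ) :
    IsMirroredInvolution (leftTensorHom 𝕜 ι κ).range ψ δ (leftTensorHom 𝕜 ι κ X) where
  mem := AlgHom.mem_range_self _ X
  norm_le_one := by
    rw [leftTensorHom_apply]
    exact norm_toEuclideanCLM_le_one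
      (kronecker_mem_unitary (mem_unitaryGroup_of_isHermitian_of_mul_self hX.1 hX.2) (one_mem _))
  mul_self := by rw [← map_mul, hX.2, map_one]
  exists_mirror := ⟨_, toEuclideanCLM_one_kronecker_mem_centralizer X',
    norm_toEuclideanCLM_le_one (kronecker_mem_unitary (one_mem _) hX'), h⟩

end TensorProduct

/-- Approximate Magic Square anticommutation.
`F i`, `G i`, `H i` (for `i = 0, 1, 2`) are the binary observables `F₀, F₁, F₂`,
`G₀, G₁, G₂`, `H₀, H₁, H₂` on `H_A = ℂ^{nA}`, and primed ones on `H_B = ℂ^{nB}`. -/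
theorem stmt_18 :
    ∃ C : ℝ, 0 < C ∧
      ∀ (nA nB : ℕ) (ψ : EuclideanSpace ℂ (Fin nA × Fin nB)), ‖ψ‖ = 1 →
      ∀ (F G H : Fin 3 → Matrix (Fin nA) (Fin nA) ℂ)
        (F' G' H' : Fin 3 → Matrix (Fin nB) (Fin nB) ℂ),
        (∀ i, (F i).IsHermitian ∧ F i * F i = 1) →
        (∀ i, (G i).IsHermitian ∧ G i * G i = 1) →
        (∀ i, (H i).IsHermitian ∧ H i * H i = 1) →
        (∀ i, (F' i).IsHermitian ∧ F' i * F' i = 1) →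
        (∀ i, (G' i).IsHermitian ∧ G' i * G' i = 1) →
        (∀ i, (H' i).IsHermitian ∧ H' i * H' i = 1) →
      ∀ (δ : ℝ), 0 ≤ δ →
        (∀ i, ‖mApply (F i ⊗ₖ (1 : Matrix (Fin nB) (Fin nB) ℂ)) ψ -
            mApply ((1 : Matrix (Fin nA) (Fin nA) ℂ) ⊗ₖ F' i) ψ‖ ≤ δ) →
        (∀ i, ‖mApply (G i ⊗ₖ (1 : Matrix (Fin nB) (Fin nB) ℂ)) ψ -
            mApply ((1 : Matrix (Fin nA) (Fin nA) ℂ) ⊗ₖ G' i) ψ‖ ≤ δ) →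
        (∀ i, ‖mApply (H i ⊗ₖ (1 : Matrix (Fin nB) (Fin nB) ℂ)) ψ -
            mApply ((1 : Matrix (Fin nA) (Fin nA) ℂ) ⊗ₖ H' i) ψ‖ ≤ δ) →
        ‖mApply ((F 0 * F 1 * F 2) ⊗ₖ (1 : Matrix (Fin nB) (Fin nB) ℂ)) ψ - ψ‖ ≤ δ →
        ‖mApply ((G 0 * G 1 * G 2) ⊗ₖ (1 : Matrix (Fin nB) (Fin nB) ℂ)) ψ - ψ‖ ≤ δ →
        ‖mApply ((H 0 * H 1 * H 2) ⊗ₖ (1 : Matrix (Fin nB) (Fin nB) ℂ)) ψ - ψ‖ ≤ δ →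
        ‖mApply ((F 0 * G 2 * H 0) ⊗ₖ (1 : Matrix (Fin nB) (Fin nB) ℂ)) ψ - ψ‖ ≤ δ →
        ‖mApply ((F 2 * G 0 * H 1) ⊗ₖ (1 : Matrix (Fin nB) (Fin nB) ℂ)) ψ - ψ‖ ≤ δ →
        ‖mApply ((F 1 * G 1 * H 2) ⊗ₖ (1 : Matrix (Fin nB) (Fin nB) ℂ)) ψ + ψ‖ ≤ δ →
        ‖mApply ((F 0 * G 0 + G 0 * F 0) ⊗ₖ (1 : Matrix (Fin nB) (Fin nB) ℂ)) ψ‖ ≤ C * δ ∧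
        ‖mApply ((F 2 * G 2 + G 2 * F 2) ⊗ₖ (1 : Matrix (Fin nB) (Fin nB) ℂ)) ψ‖ ≤ C * δ := by
  refine ⟨26, by norm_num, ?_⟩
  intro nA nB ψ _ F G H F' G' H' hF hG hH hF' hG' hH' δ _ hFψ hGψ hHψ
  simp only [mApply_eq_toEuclideanCLM, ← leftTensorHom_apply, map_mul, map_add] at hFψ hGψ hHψ ⊢
  have mirrored {X : Matrix (Fin nA) (Fin nA) ℂ} {X' : Matrix (Fin nB) (Fin nB) ℂ}
      (hX : X.IsHermitian ∧ X * X = 1) (hX' : X'.IsHermitian ∧ X' * X' = 1) :=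
    isMirroredInvolution_leftTensorHom (ψ := ψ) (δ := δ) hX
      (mem_unitaryGroup_of_isHermitian_of_mul_self hX'.1 hX'.2)
  exact (stmt_18_general (fun i ↦ mirrored (hF i) (hF' i) (hFψ i))
    (fun i ↦ mirrored (hG i) (hG' i) (hGψ i)) (fun i ↦ mirrored (hH i) (hH' i) (hHψ i)) :)
end
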